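/- Let M be a commutative idempotent monoid generated by X₁,…,X_n and G an abelian group. Let K₁ : M × M → G be a function satisfying the chain rule K₁(XY) = K₁(X) + K₁(Y | X) for all X, Y ∈ M, where K₁(X) := K₁(X | 1). Define K_q : M^q × M → G inductively by K_q(Y₁;…;Y_q | Z) := K_{q−1}(Y₁;…;Y_{q−1} | Z) − K_{q−1}(Y₁;…;Y_{q−1} | Y_q·Z). Then the unique G-valued measure μ : 2^{X̃} → G determined on atoms by μ({p_I}) = ∑_{∅≠K⊇I^c} (−1)^{|K|+|I|+1−n}·K₁(X_K) (where I^c = [n]∖I) satisfies, for all q ≥ 1 and all J, L₁,…,L_q ⊆ [n]: K_q(X_{L₁};…;X_{L_q} | X_J) = μ(⋂_{k=1}^q X̃_{L_k} \ X̃_J). -/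

import Mathlib

/-!
Write `f K = K₁(X_K | 1)`; the chain rule at `(1, 1)` gives `f ∅ = 0`. The prescribed atom masses
are the Möbius transform of `f`: summed over all `I` disjoint from `L` they give `-f L`, because the
coefficient of `f K` is an alternating sum over the interval `[Kᶜ, Lᶜ]` of the Boolean lattice,
which vanishes unless `K = L` (`sum_Icc_sign`, `sum_disjoint_atomMass`). Taking the complement,
`μ(X̃_L) = f L` (`atomMeasure_circlesOf`).

The chain rule then reads `K₁(X_L | X_J) = f (J ∪ L) - f J = μ(X̃_L \ X̃_J)`, which is the case
`q = 1`; idempotence enters here through `X_J X_L = X_{J ∪ L}`. The general case follows by induction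
on `q`, using `μ(A \ X̃_J) - μ(A \ X̃_{L ∪ J}) = μ((A ∩ X̃_L) \ X̃_J)`.
-/

open scoped Classical

noncomputable section

universe u v

/-- The higher conditional interaction terms `K_q(Y₁;…;Y_q | Z)`, defined
inductively from the two-argument function `K₁(· | ·)` by
`K_q(Y₁;…;Y_q | Z) = K_{q−1}(Y₁;…;Y_{q−1} | Z) − K_{q−1}(Y₁;…;Y_{q−1} | Y_q·Z)`
(the value for `q = 0` is junk). -/
def Kq {M : Type u} {G : Type v} [CommMonoid M] [AddCommGroup G]
    (K1 : M → M → G) : (q : ℕ) → (Fin q → M) → M → G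
  | 0, _, _ => 0
  | 1, Y, Z => K1 (Y 0) Z
  | q + 2, Y, Z =>
      Kq K1 (q + 1) (fun i => Y i.castSucc) Z
        - Kq K1 (q + 1) (fun i => Y i.castSucc) (Y (Fin.last (q + 1)) * Z)

/-- The set `X̃(n)` of abstract atoms `p_I`, one for each nonempty `I ⊆ [n]`. -/
def Atom (n : ℕ) : Type :=
  {I : Finset (Fin n) // I.Nonempty}

/-- `X̃_L = ⋃_{i ∈ L} X̃_i`, the union of the circles of the variables in `L`. -/
def circlesOf {n : ℕ} (L : Finset (Fin n)) : Set (Atom n) :=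
  {p | ∃ i ∈ L, i ∈ p.1}

/-- The mass prescribed on the atom `p_I`. The formula is used for `I = ∅` as well, where there is
no atom. -/
def atomMass {G : Type v} [AddCommGroup G] {n : ℕ} (f : Finset (Fin n) → G)
    (I : Finset (Fin n)) : G :=
  ∑ K ∈ Finset.univ.filter (fun K : Finset (Fin n) => K.Nonempty ∧ Iᶜ ⊆ K),
    (-1 : ℤ) ^ (K.card + I.card + 1 - n) • f K

/-- The measure whose value on each atom `p_I` is `atomMass f I`. -/
def atomMeasure {G : Type v} [AddCommGroup G] {n : ℕ} (f : Finset (Fin n) → G)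
    (A : Set (Atom n)) : G :=
  ∑ I : Finset (Fin n), if ∃ h : I.Nonempty, (⟨I, h⟩ : Atom n) ∈ A then atomMass f I else 0

theorem atomMeasure_union {G : Type v} [AddCommGroup G] {n : ℕ} (f : Finset (Fin n) → G)
    (A B : Set (Atom n)) (h : Disjoint A B) :
    atomMeasure f (A ∪ B) = atomMeasure f A + atomMeasure f B := by
  unfold atomMeasure
  rw [← Finset.sum_add_distrib]
  refine Finset.sum_congr rfl fun I _ => ?_
  by_cases hI : I.Nonempty
  · obtain ⟨p, hp⟩ : ∃ p : Atom n, ∀ C : Set (Atom n),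
        (∃ h : I.Nonempty, (⟨I, h⟩ : Atom n) ∈ C) ↔ p ∈ C :=
      ⟨⟨I, hI⟩, fun C => ⟨fun ⟨_, h⟩ => h, fun h => ⟨hI, h⟩⟩⟩
    simp only [hp, Set.mem_union]
    by_cases hA : p ∈ A
    · have hB : p ∉ B := Set.disjoint_left.mp h hA
      simp [hA, hB]
    · simp [hA]
  · simp [hI]

theorem atomMeasure_singleton {G : Type v} [AddCommGroup G] {n : ℕ} (f : Finset (Fin n) → G)
    (I : Finset (Fin n)) (hI : I.Nonempty) :
    atomMeasure f {(⟨I, hI⟩ : Atom n)} = atomMass f I := by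
  unfold atomMeasure
  rw [Finset.sum_eq_single I]
  · rw [if_pos ⟨hI, rfl⟩]
  · intro I' _ hne
    rw [if_neg]
    rintro ⟨h, h'⟩
    exact hne (congrArg Subtype.val (Set.mem_singleton_iff.mp h'))
  · simp

/-- The exponent is `|I| - |Kᶜ| + 1`, so the sum over the interval `[Kᶜ, Lᶜ]` is minus an alternating
sum over the subsets of `K \ L`. -/
theorem sum_Icc_sign {n : ℕ} (K L : Finset (Fin n)) :
    ∑ I ∈ Finset.Icc Kᶜ Lᶜ, (-1 : ℤ) ^ (K.card + I.card + 1 - n) = if K = L then -1 else 0 := by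
  by_cases h : L ⊆ K
  · have h' : Kᶜ ⊆ Lᶜ := Finset.compl_subset_compl.mpr h
    rw [Finset.Icc_eq_image_powerset h', Finset.sum_image]
    · have key : ∀ U ∈ (Lᶜ \ Kᶜ).powerset,
          (-1 : ℤ) ^ (K.card + (Kᶜ ∪ U).card + 1 - n) = -(-1) ^ U.card := by
        intro U hU
        have hd : Disjoint Kᶜ U :=
          (Finset.sdiff_disjoint.mono_left (Finset.mem_powerset.mp hU)).symm
        have hc := Finset.card_add_card_compl K
        rw [Fintype.card_fin] at hc
        rw [Finset.card_union_of_disjoint hd,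
          show K.card + (Kᶜ.card + U.card) + 1 - n = U.card + 1 by omega, pow_succ]
        ring
      rw [Finset.sum_congr rfl key, Finset.sum_neg_distrib, Finset.sum_powerset_neg_one_pow_card]
      have : Lᶜ \ Kᶜ = ∅ ↔ K = L := by
        rw [Finset.sdiff_eq_empty_iff_subset, Finset.compl_subset_compl]
        exact ⟨fun a => a.antisymm h, fun a => a.subset⟩
      simp only [this]
      split_ifs <;> simp
    · intro U hU V hV hUV
      have hU' : Disjoint U Kᶜ := Finset.sdiff_disjoint.mono_left (Finset.mem_powerset.mp hU)
      have hV' : Disjoint V Kᶜ := Finset.sdiff_disjoint.mono_left (Finset.mem_powerset.mp hV)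
      rw [← Finset.union_sdiff_cancel_left hU'.symm, ← Finset.union_sdiff_cancel_left hV'.symm]
      exact congrArg (· \ Kᶜ) hUV
  · rw [Finset.Icc_eq_empty, Finset.sum_empty, if_neg]
    · rintro rfl
      exact h subset_rfl
    · exact fun h' => h (Finset.compl_subset_compl.mp h')

/-- Möbius inversion for `atomMass`. The sum includes the fictitious term `I = ∅`. -/
theorem sum_disjoint_atomMass {G : Type v} [AddCommGroup G] {n : ℕ} (f : Finset (Fin n) → G)
    (hf : f ∅ = 0) (L : Finset (Fin n)) :
    ∑ I : Finset (Fin n), (if Disjoint I L then atomMass f I else 0) = -f L := by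
  have hm : ∀ I : Finset (Fin n), (if Disjoint I L then atomMass f I else 0)
      = ∑ K : Finset (Fin n), (if I ∈ Finset.Icc Kᶜ Lᶜ
          then (-1 : ℤ) ^ (K.card + I.card + 1 - n) else 0) • f K := by
    intro I
    have hL : Disjoint I L ↔ I ⊆ Lᶜ := Finset.subset_compl_iff_disjoint_right.symm
    rw [atomMass, Finset.sum_filter]
    by_cases hd : Disjoint I L
    · rw [if_pos hd]
      refine Finset.sum_congr rfl fun K _ => ?_
      have hK : Kᶜ ⊆ I ↔ Iᶜ ⊆ K := by
        rw [← Finset.compl_subset_compl, compl_compl]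
      rcases K.eq_empty_or_nonempty with rfl | hne
      · simp [hf]
      · simp only [Finset.mem_Icc, hK, hL.mp hd, hne, and_true, true_and]
        split_ifs <;> simp
    · rw [if_neg hd]
      symm
      refine Finset.sum_eq_zero fun K _ => ?_
      rw [if_neg, zero_smul]
      intro h
      exact hd (hL.mpr (Finset.mem_Icc.mp h).2)
  rw [Finset.sum_congr rfl fun I _ => hm I, Finset.sum_comm]
  simp_rw [← Finset.sum_smul, Finset.sum_ite_mem, Finset.univ_inter, sum_Icc_sign]
  simp [ite_smul]

theorem atomMeasure_circlesOf {G : Type v} [AddCommGroup G] {n : ℕ} (f : Finset (Fin n) → G)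
    (hf : f ∅ = 0) (L : Finset (Fin n)) : atomMeasure f (circlesOf L) = f L := by
  have h0 := sum_disjoint_atomMass f hf ∅
  have hL := sum_disjoint_atomMass f hf L
  have : atomMeasure f (circlesOf L)
      = ∑ I : Finset (Fin n), (if Disjoint I ∅ then atomMass f I else 0)
        - ∑ I : Finset (Fin n), (if Disjoint I L then atomMass f I else 0) := by
    rw [← Finset.sum_sub_distrib, atomMeasure]
    refine Finset.sum_congr rfl fun I _ => ?_
    have hc : (∃ h : I.Nonempty, (⟨I, h⟩ : Atom n) ∈ circlesOf L) ↔ ¬ Disjoint I L := by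
      rw [Finset.not_disjoint_iff]
      constructor
      · rintro ⟨_, i, hi, hi'⟩
        exact ⟨i, hi', hi⟩
      · rintro ⟨i, hi, hi'⟩
        exact ⟨⟨i, hi⟩, i, hi', hi⟩
    simp only [hc]
    by_cases hd : Disjoint I L <;> simp [hd]
  rw [this, h0, hL, hf]
  simp

theorem circlesOf_union {n : ℕ} (A B : Finset (Fin n)) :
    circlesOf (A ∪ B) = circlesOf A ∪ circlesOf B := by
  ext p
  simp only [circlesOf, Finset.mem_union, Set.mem_union, Set.mem_ofPred_eq, or_and_right, exists_or]

theorem prod_mul_prod_union {M : Type u} [CommMonoid M] {n : ℕ} (X : Fin n → M)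
    (hidem : ∀ m : M, m * m = m) (A B : Finset (Fin n)) :
    (∏ i ∈ A, X i) * ∏ i ∈ B, X i = ∏ i ∈ A ∪ B, X i := by
  rw [← Finset.prod_union_inter, ← Finset.prod_sdiff
    (Finset.inter_subset_left.trans Finset.subset_union_left : A ∩ B ⊆ A ∪ B), mul_assoc, hidem]

/-- Hu's theorem for two-argument functions: if `K₁ : M × M → G` satisfies the
chain rule `K₁(XY | 1) = K₁(X | 1) + K₁(Y | X)` on a commutative idempotent
monoid `M` generated by `X₁,…,X_n`, then the `G`-valued measure determined on
atoms by `μ(p_I) = ∑_{∅≠K⊇Iᶜ} (−1)^{|K|+|I|+1−n}·K₁(X_K | 1)` satisfies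
`K_q(X_{L₁};…;X_{L_q} | X_J) = μ(⋂_k X̃_{L_k} \ X̃_J)`. -/
theorem stmt13 {M : Type u} {G : Type v} [CommMonoid M] [AddCommGroup G]
    {n : ℕ} (X : Fin n → M)
    (hidem : ∀ m : M, m * m = m)
    (hgen : ∀ m : M, ∃ I : Finset (Fin n), m = ∏ i ∈ I, X i)
    (K1 : M → M → G)
    (hchain : ∀ a b : M, K1 (a * b) 1 = K1 a 1 + K1 b a) :
    ∃ μ : Set (Atom n) → G,
      (∀ A B : Set (Atom n), Disjoint A B → μ (A ∪ B) = μ A + μ B) ∧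
      (∀ (I : Finset (Fin n)) (hI : I.Nonempty),
        μ {(⟨I, hI⟩ : Atom n)}
          = ∑ K ∈ Finset.univ.filter
              (fun K : Finset (Fin n) => K.Nonempty ∧ Iᶜ ⊆ K),
              (-1 : ℤ) ^ (K.card + I.card + 1 - n) • K1 (∏ i ∈ K, X i) 1) ∧
      (∀ q : ℕ, 1 ≤ q → ∀ (L : Fin q → Finset (Fin n)) (J : Finset (Fin n)),
        Kq K1 q (fun k => ∏ i ∈ L k, X i) (∏ i ∈ J, X i)
          = μ ((⋂ k, circlesOf (L k)) \ circlesOf J)) := by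
  have hf : K1 (∏ i ∈ (∅ : Finset (Fin n)), X i) 1 = 0 := by
    have h := hchain 1 1
    rw [mul_one] at h
    simpa using h
  set f : Finset (Fin n) → G := fun K => K1 (∏ i ∈ K, X i) 1 with hfdef
  refine ⟨atomMeasure f, atomMeasure_union f, atomMeasure_singleton f, ?_⟩
  have hcond : ∀ L J : Finset (Fin n),
      K1 (∏ i ∈ L, X i) (∏ i ∈ J, X i) = atomMeasure f (circlesOf L \ circlesOf J) := by
    intro L J
    have h1 := hchain (∏ i ∈ J, X i) (∏ i ∈ L, X i)
    rw [prod_mul_prod_union X hidem] at h1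
    have h2 := atomMeasure_union f (circlesOf J) (circlesOf L \ circlesOf J)
      Set.disjoint_sdiff_right
    rw [Set.union_sdiff_self, ← circlesOf_union, atomMeasure_circlesOf f hf,
      atomMeasure_circlesOf f hf] at h2
    exact add_left_cancel (h1.symm.trans h2)
  intro q hq
  induction q, hq using Nat.le_induction with
  | base =>
    intro L J
    have : (⋂ k, circlesOf (L k)) = circlesOf (L 0) := by
      ext p
      simp [Fin.forall_fin_one]
    rw [this, ← hcond]
    rfl
  | succ q hq ih =>
    obtain ⟨q, rfl⟩ := Nat.exists_eq_add_of_le' hq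
    intro L J
    have hK : Kq K1 (q + 1 + 1) (fun k => ∏ i ∈ L k, X i) (∏ i ∈ J, X i)
        = Kq K1 (q + 1) (fun k => ∏ i ∈ L k.castSucc, X i) (∏ i ∈ J, X i)
          - Kq K1 (q + 1) (fun k => ∏ i ∈ L k.castSucc, X i)
              ((∏ i ∈ L (Fin.last (q + 1)), X i) * ∏ i ∈ J, X i) := rfl
    rw [hK, prod_mul_prod_union X hidem, ih (fun k => L k.castSucc), ih (fun k => L k.castSucc),
      sub_eq_iff_eq_add, circlesOf_union, ← atomMeasure_union]
    · congr 1
      ext p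
      simp only [Set.mem_sdiff, Set.mem_iInter, Set.mem_union, Fin.forall_fin_succ' (n := q + 1)]
      tauto
    · rw [Set.disjoint_left]
      rintro p ⟨hp, _⟩ ⟨_, hp'⟩
      exact hp' (Or.inl (Set.mem_iInter.mp hp (Fin.last (q + 1))))
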